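/- Let p be a prime number and A a commutative ring of characteristic p. Define exp_{<p}(x) = Σ_{i=0}^{p−1} d_i·x^i, where d_i ∈ A is the image under the canonical ring homomorphism ℤ/pℤ → A of the inverse of i! in ℤ/pℤ, and define a ⋆ b = a + b + Σ_{i=1}^{p−1} c_i·a^i·b^{p−i}, where c_i ∈ A is the image of the inverse of i!·(p−i)! in ℤ/pℤ. Then for all a, b ∈ A with a^p = b^p = 0 one has exp_{<p}(a)^p = 1 and exp_{<p}(a)·exp_{<p}(b) = exp_{<p}(a ⋆ b). -/

import Mathlib

/-!
Write `γ x n = xⁿ / n!` (`gam`), read as `0` when `n ≥ p` (the inverse of `n! = 0` in `ℤ/pℤ` is `0`).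
If `x ^ p = 0`, these elements satisfy the divided power law
`γ x m * γ x n = (m + n).choose m • γ x (m + n)` for *all* `m, n` (`gam_mul`). By Vandermonde's
identity the convolution (`conv`) `G n = ∑_{i + j = n} γ a i * γ b j` satisfies the same law (`conv_mul`).
Moreover `G 0 = 1`, `G 1 = a + b`, `G n = 0` for `n ≥ 2p - 1`, and `G p` is the correction term
`∑ cᵢ aⁱ b^{p-i}` of the Oort–Tate law, so that `a ⋆ b = G 1 + G p`.

The law gives `G n = (a + b)ⁿ / n!` for `n < p`, while `(n + p).choose p ≡ 1 mod p` (Lucas) gives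
`G (n + p) = G n * G p` for `n < p`. Hence
`exp a * exp b = ∑_{n < 2p} G n = exp (a + b) * (1 + G p)`.
Since `G p ^ 2` and `(a + b) ^ (p - 1) * G p` are multiples of `G (2p) = 0` and `G (2p - 1) = 0`,
the first-order Taylor expansion gives `exp (a + b + G p) = exp (a + b) * (1 + G p)` as well.
The equality `exp(a) ^ p = 1` is additivity of the Frobenius.
-/

open Finset

/-- The Oort–Tate composition law with twist parameter `τ = 1`:
`a ⋆ b = a + b + ∑_{i=1}^{p-1} cᵢ aⁱ b^{p-i}`, where `cᵢ` is the image in `A` of the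
inverse of `i!(p-i)!` in `ℤ/pℤ`. -/
noncomputable def oortTateStar (p : ℕ) {A : Type*} [CommRing A] [CharP A p] (a b : A) : A :=
  a + b + ∑ i ∈ Finset.Icc 1 (p - 1),
    ZMod.castHom dvd_rfl A ((↑(Nat.factorial i) * ↑(Nat.factorial (p - i)) : ZMod p)⁻¹) *
      a ^ i * b ^ (p - i)

/-- The truncated exponential `exp_{<p}(x) = ∑_{i=0}^{p-1} dᵢ xⁱ`, where `dᵢ` is the image
in `A` of the inverse of `i!` in `ℤ/pℤ`. -/
noncomputable def truncExp (p : ℕ) {A : Type*} [CommRing A] [CharP A p] (x : A) : A :=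
  ∑ i ∈ Finset.range p,
    ZMod.castHom dvd_rfl A ((↑(Nat.factorial i) : ZMod p)⁻¹) * x ^ i

namespace OortTate

variable {p : ℕ} {A : Type*} [CommRing A] [CharP A p]

/-- The image in `A` of the inverse of `n!` in `ℤ/pℤ`; it is `0` for `n ≥ p`. -/
noncomputable def invFact (p : ℕ) (A : Type*) [CommRing A] [CharP A p] (n : ℕ) : A :=
  ZMod.castHom dvd_rfl A ((↑(Nat.factorial n) : ZMod p)⁻¹)

/-- The truncated divided power `xⁿ / n!`, equal to `0` for `n ≥ p`. -/
noncomputable def gam (p : ℕ) {A : Type*} [CommRing A] [CharP A p] (x : A) (n : ℕ) : A :=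
  invFact p A n * x ^ n

/-- The divided power `(a + b)ⁿ / n!` expanded formally: the convolution of the truncated
divided powers of `a` and `b`. It can be nonzero for `p ≤ n ≤ 2p - 2`. -/
noncomputable def conv (p : ℕ) {A : Type*} [CommRing A] [CharP A p] (a b : A) (n : ℕ) : A :=
  ∑ x ∈ antidiagonal n, gam p a x.1 * gam p b x.2

lemma factorial_ne_zero [Fact p.Prime] {n : ℕ} (h : n < p) : (n.factorial : ZMod p) ≠ 0 := by
  rw [Ne, ZMod.natCast_eq_zero_iff, (Fact.out : p.Prime).dvd_factorial]
  omega

lemma invFact_of_le [Fact p.Prime] {n : ℕ} (h : p ≤ n) : invFact p A n = 0 := by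
  have : (n.factorial : ZMod p) = 0 := by
    rw [ZMod.natCast_eq_zero_iff, (Fact.out : p.Prime).dvd_factorial]
    exact h
  simp [invFact, this]

lemma factorial_mul_invFact [Fact p.Prime] {n : ℕ} (h : n < p) :
    (n.factorial : A) * invFact p A n = 1 := by
  have := congrArg (ZMod.castHom dvd_rfl A) (mul_inv_cancel₀ (factorial_ne_zero h))
  rwa [map_mul, map_natCast, map_one] at this

@[simp] lemma invFact_zero [Fact p.Prime] : invFact p A 0 = 1 := by simp [invFact]

@[simp] lemma invFact_one [Fact p.Prime] : invFact p A 1 = 1 := by simp [invFact]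

lemma succ_mul_invFact [Fact p.Prime] {n : ℕ} (h : n + 1 < p) :
    ((n + 1 : ℕ) : A) * invFact p A (n + 1) = invFact p A n := by
  have h1 := factorial_mul_invFact (A := A) h
  have h2 := factorial_mul_invFact (A := A) (show n < p by omega)
  rw [Nat.factorial_succ, Nat.cast_mul] at h1
  linear_combination invFact p A n * h1
    - ((n + 1 : ℕ) : A) * invFact p A (n + 1) * h2

lemma invFact_mul [Fact p.Prime] {m n : ℕ} (h : m + n < p) :
    invFact p A m * invFact p A n = ((m + n).choose m : A) * invFact p A (m + n) := by
  have h1 := factorial_mul_invFact (A := A) h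
  have h2 := factorial_mul_invFact (A := A) (show m < p by omega)
  have h3 := factorial_mul_invFact (A := A) (show n < p by omega)
  have h4 : ((m + n).choose m : A) * m.factorial * n.factorial = (m + n).factorial := by
    rw [Nat.choose_symm_add]
    rw [← Nat.add_choose_mul_factorial_mul_factorial m n, Nat.cast_mul, Nat.cast_mul]
  set M := invFact p A m
  set N := invFact p A n
  set K := invFact p A (m + n)
  linear_combination -(M * N) * h1 + ((m + n).choose m : A) * K * (m.factorial * M) * h3 +
    ((m + n).choose m : A) * K * h2 - M * N * K * h4

lemma gam_of_le [Fact p.Prime] (x : A) {n : ℕ} (h : p ≤ n) : gam p x n = 0 := by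
  simp [gam, invFact_of_le h]

@[simp] lemma gam_zero [Fact p.Prime] (x : A) : gam p x 0 = 1 := by simp [gam]

@[simp] lemma gam_one [Fact p.Prime] (x : A) : gam p x 1 = x := by simp [gam]

lemma gam_mul [Fact p.Prime] {x : A} (hx : x ^ p = 0) (m n : ℕ) :
    gam p x m * gam p x n = ((m + n).choose m : A) * gam p x (m + n) := by
  by_cases h : m + n < p
  · simp only [gam, pow_add]
    linear_combination x ^ m * x ^ n * invFact_mul (A := A) h
  · have h0 : x ^ (m + n) = 0 := pow_eq_zero_of_le (by omega) hx
    rw [gam_of_le x (not_lt.mp h), mul_zero]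
    simp only [gam]
    rw [mul_mul_mul_comm, ← pow_add, h0, mul_zero]

lemma conv_mul [Fact p.Prime] {a b : A} (ha : a ^ p = 0) (hb : b ^ p = 0) (m n : ℕ) :
    conv p a b m * conv p a b n = ((m + n).choose m : A) * conv p a b (m + n) := by
  have key : ∀ x ∈ antidiagonal m,
      ∑ y ∈ antidiagonal n, gam p a x.1 * gam p b x.2 * (gam p a y.1 * gam p b y.2) =
      ∑ z ∈ antidiagonal (m + n),
        (z.1.choose x.1 : A) * (z.2.choose x.2 : A) * (gam p a z.1 * gam p b z.2) := by
    intro x hx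
    rw [HasAntidiagonal.mem_antidiagonal] at hx
    refine Finset.sum_of_injOn (fun y => (x.1 + y.1, x.2 + y.2)) ?_ ?_ ?_ ?_
    · intro y _ y' _ h
      simp only [Prod.mk.injEq, add_right_inj] at h
      exact Prod.ext h.1 h.2
    · intro y hy
      simp only [mem_coe, HasAntidiagonal.mem_antidiagonal] at hy ⊢
      omega
    · intro z hz hnot
      -- an index outside the image has `z.1 < x.1` or `z.2 < x.2`
      by_cases h1 : z.1 < x.1
      · simp [Nat.choose_eq_zero_of_lt h1]
      by_cases h2 : z.2 < x.2
      · simp [Nat.choose_eq_zero_of_lt h2]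
      refine absurd ⟨(z.1 - x.1, z.2 - x.2), ?_, ?_⟩ hnot
      · simp only [mem_coe, HasAntidiagonal.mem_antidiagonal] at hz ⊢
        omega
      · ext <;> simp <;> omega
    · intro y _
      rw [mul_mul_mul_comm, gam_mul ha, gam_mul hb]
      ring
  unfold conv
  rw [sum_mul_sum, sum_congr rfl key, sum_comm, mul_sum]
  refine sum_congr rfl fun z hz => ?_
  rw [HasAntidiagonal.mem_antidiagonal] at hz
  rw [← sum_mul, ← hz, Nat.add_choose_eq]
  push_cast
  rfl

lemma conv_of_le [Fact p.Prime] (a b : A) {n : ℕ} (h : 2 * p ≤ n + 1) : conv p a b n = 0 := by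
  refine sum_eq_zero fun x hx => ?_
  rw [HasAntidiagonal.mem_antidiagonal] at hx
  by_cases h1 : p ≤ x.1
  · rw [gam_of_le a h1, zero_mul]
  · rw [gam_of_le b (by omega : p ≤ x.2), mul_zero]

@[simp] lemma conv_zero [Fact p.Prime] (a b : A) : conv p a b 0 = 1 := by simp [conv]

lemma conv_one [Fact p.Prime] (a b : A) : conv p a b 1 = a + b := by
  simp [conv, Finset.Nat.antidiagonal_succ, add_comm]

lemma pow_eq_factorial_mul_conv [Fact p.Prime] {a b : A} (ha : a ^ p = 0) (hb : b ^ p = 0)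
    (n : ℕ) : (a + b) ^ n = (n.factorial : A) * conv p a b n := by
  induction n with
  | zero => simp
  | succ n ih =>
    have h := conv_mul ha hb n 1
    rw [conv_one, Nat.choose_succ_self_right] at h
    rw [pow_succ, ih, mul_assoc, h, Nat.factorial_succ]
    push_cast
    ring

lemma gam_add [Fact p.Prime] {a b : A} (ha : a ^ p = 0) (hb : b ^ p = 0) {n : ℕ} (h : n < p) :
    gam p (a + b) n = conv p a b n := by
  rw [gam, pow_eq_factorial_mul_conv ha hb]
  linear_combination conv p a b n * factorial_mul_invFact (A := A) h

lemma conv_add_prime [Fact p.Prime] {a b : A} (ha : a ^ p = 0) (hb : b ^ p = 0) {n : ℕ}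
    (h : n < p) : conv p a b (p + n) = conv p a b p * conv p a b n := by
  have hp : 0 < p := (Fact.out : p.Prime).pos
  have hl := Choose.choose_modEq_choose_mod_mul_choose_div_nat (p := p) (n := p + n) (k := p)
  rw [Nat.add_mod_left, Nat.mod_self, Nat.choose_zero_right, Nat.div_self hp,
    Nat.add_div_left _ hp, Nat.div_eq_of_lt h] at hl
  have hc : (((p + n).choose p : ℕ) : A) = ((1 : ℕ) : A) :=
    (CharP.natCast_eq_natCast A p).mpr (by simpa using hl)
  rw [conv_mul ha hb, hc, Nat.cast_one, one_mul]

lemma truncExp_eq (x : A) : truncExp p x = ∑ i ∈ range p, gam p x i := rfl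

lemma oortTateStar_eq [Fact p.Prime] (a b : A) :
    oortTateStar p a b = a + b + conv p a b p := by
  have hp : 0 < p := (Fact.out : p.Prime).pos
  rw [oortTateStar, conv, Finset.Nat.sum_antidiagonal_eq_sum_range_succ_mk]
  congr 1
  -- the extra indices `0` and `p` contribute `0`
  refine sum_subset_zero_on_sdiff (fun i hi => ?_) (fun i hi => ?_) (fun i _ => ?_)
  · simp only [mem_Icc, mem_range] at hi ⊢
    omega
  · simp only [mem_sdiff, mem_Icc, mem_range] at hi
    obtain rfl | rfl : i = 0 ∨ i = p := by omega
    · rw [gam_of_le b (by simp), mul_zero]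
    · rw [gam_of_le a le_rfl, zero_mul]
  · simp only [gam, invFact, mul_inv, map_mul]
    ring

lemma truncExp_mul [Fact p.Prime] (a b : A) :
    truncExp p a * truncExp p b = ∑ n ∈ range (p + p), conv p a b n := by
  rw [truncExp_eq, truncExp_eq, sum_mul_sum, ← sum_product',
    ← sum_fiberwise_of_maps_to (t := range (p + p)) (g := fun x : ℕ × ℕ => x.1 + x.2)]
  · refine sum_congr rfl fun n _ => sum_subset (fun x hx => ?_) fun x hx hx' => ?_
    · simp only [mem_filter, HasAntidiagonal.mem_antidiagonal] at hx ⊢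
      exact hx.2
    · simp only [mem_filter, HasAntidiagonal.mem_antidiagonal, mem_product, mem_range] at hx hx'
      by_cases h1 : p ≤ x.1
      · rw [gam_of_le a h1, zero_mul]
      · rw [gam_of_le b (by omega : p ≤ x.2), mul_zero]
  · intro x hx
    simp only [mem_product, mem_range] at hx ⊢
    omega

lemma add_pow_of_sq_eq_zero {s w : A} (hw : w * w = 0) (n : ℕ) :
    (s + w) ^ (n + 1) = s ^ (n + 1) + ((n + 1 : ℕ) : A) * s ^ n * w := by
  induction n with
  | zero => simp
  | succ n ih =>
    rw [pow_succ, ih]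
    push_cast
    linear_combination ((n : A) + 1) * s ^ n * hw

/-- The Taylor expansion of `truncExp` at `s`; the top term of `truncExp p s * w` has no
counterpart in the derivative of `truncExp`, whence the second hypothesis. -/
lemma truncExp_add [Fact p.Prime] {s w : A} (hw : w * w = 0) (hs : s ^ (p - 1) * w = 0) :
    truncExp p (s + w) = truncExp p s * (1 + w) := by
  obtain ⟨q, hq⟩ : ∃ q, p = q + 1 := ⟨p - 1, by have := (Fact.out : p.Prime).pos; omega⟩
  have hs' : s ^ q * w = 0 := by rwa [show p - 1 = q by omega] at hs
  have hr : range p = range (q + 1) := by rw [hq]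
  have h1 : truncExp p s * w = (∑ n ∈ range q, gam p s n) * w := by
    rw [truncExp_eq, hr, sum_range_succ, add_mul]
    simp only [gam]
    rw [mul_assoc _ _ w, hs', mul_zero, add_zero]
  rw [mul_add, mul_one, h1, truncExp_eq, truncExp_eq, hr, sum_range_succ', sum_range_succ',
    sum_mul, gam_zero, gam_zero, add_right_comm, ← sum_add_distrib]
  congr 1
  refine sum_congr rfl fun n hn => ?_
  rw [mem_range] at hn
  have h2 := succ_mul_invFact (A := A) (show n + 1 < p by omega)
  simp only [gam, add_pow_of_sq_eq_zero hw]
  linear_combination s ^ n * w * h2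

end OortTate

open OortTate in
/-- Let `p` be a prime and `A` a commutative ring of characteristic `p`.
Then for all `a, b ∈ A` with `a^p = b^p = 0` one has `exp_{<p}(a)^p = 1` and
`exp_{<p}(a) · exp_{<p}(b) = exp_{<p}(a ⋆ b)`, where `⋆` is the Oort–Tate composition law
with twist parameter `τ = 1`. -/
theorem truncExp_pow_eq_one_and_mul (p : ℕ) (hp : p.Prime) (A : Type*) [CommRing A]
    [CharP A p] :
    ∀ a b : A, a ^ p = 0 → b ^ p = 0 →
      (truncExp p a) ^ p = 1 ∧
      truncExp p a * truncExp p b = truncExp p (oortTateStar p a b) := by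
  intro a b ha hb
  have : Fact p.Prime := ⟨hp⟩
  have hpos := hp.pos
  constructor
  · rw [truncExp_eq, sum_pow_char, sum_eq_single_of_mem 0 (mem_range.mpr hpos)]
    · simp
    · intro i _ hi
      rw [gam, mul_pow, ← pow_mul, mul_comm i p, pow_mul, ha, zero_pow hi, mul_zero]
  · have hw : conv p a b p * conv p a b p = 0 := by
      rw [conv_mul ha hb, conv_of_le a b (by omega), mul_zero]
    have hs : (a + b) ^ (p - 1) * conv p a b p = 0 := by
      rw [pow_eq_factorial_mul_conv ha hb, mul_assoc, conv_mul ha hb,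
        conv_of_le a b (by omega), mul_zero, mul_zero]
    rw [oortTateStar_eq, truncExp_add hw hs, truncExp_mul, sum_range_add, truncExp_eq,
      mul_add, mul_one, sum_mul]
    congr 1
    · exact sum_congr rfl fun n hn => (gam_add ha hb (mem_range.mp hn)).symm
    · refine sum_congr rfl fun n hn => ?_
      rw [conv_add_prime ha hb (mem_range.mp hn), gam_add ha hb (mem_range.mp hn), mul_comm]
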